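/- Fix ν > 0, h > 0, τ > 0. For a smooth function u : ℝ × ℝ → ℝ define g₁ = −∂_x(u²/2) + ν·∂²_x u, g₂ = ∂_x(−g₁·u) + ν·∂²_x g₁, g₃ = ∂_x(−g₂·u − g₁²) + ν·∂²_x g₂, and the Lax–Wendroff first differential approximation operator E[u; h, τ, ν] = ∂_t u + ∂_x(u²/2) − ν·∂²_x u + (τ²/6)·g₃ + (h²/12)·∂³_x(u²) − (νh²/12)·∂⁴_x u. Suppose u is a smooth (C^∞) solution of E[u; h, τ, ν] = 0 on ℝ². Then for every λ > 0, the function v(x,t) = λ·u(λx, λ²t) satisfies E[v; h/λ, τ/λ², ν] = 0 on ℝ² (the Lax–Wendroff first differential approximation is invariant under the dilatation (x,t,u,h,τ) ↦ (λ⁻¹x, λ⁻²t, λu, λ⁻¹h, λ⁻²τ)). -/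

import Mathlib

/-- Partial derivative with respect to the first (space) variable. -/
noncomputable def pdx (u : ℝ × ℝ → ℝ) : ℝ × ℝ → ℝ :=
  fun p => deriv (fun y => u (y, p.2)) p.1

/-- Partial derivative with respect to the second (time) variable. -/
noncomputable def pdt (u : ℝ × ℝ → ℝ) : ℝ × ℝ → ℝ :=
  fun p => deriv (fun s => u (p.1, s)) p.2

/-- \`g₁ = −(u²/2)_x + ν u_xx\`. -/
noncomputable def g1 (ν : ℝ) (u : ℝ × ℝ → ℝ) : ℝ × ℝ → ℝ :=
  fun p => -pdx (fun q => (u q) ^ 2 / 2) p + ν * pdx (pdx u) p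

/-- \`g₂ = (−g₁ u)_x + ν (g₁)_xx\`. -/
noncomputable def g2 (ν : ℝ) (u : ℝ × ℝ → ℝ) : ℝ × ℝ → ℝ :=
  fun p => pdx (fun q => -g1 ν u q * u q) p + ν * pdx (pdx (g1 ν u)) p

/-- \`g₃ = (−g₂ u − g₁²)_x + ν (g₂)_xx\`. -/
noncomputable def g3 (ν : ℝ) (u : ℝ × ℝ → ℝ) : ℝ × ℝ → ℝ :=
  fun p => pdx (fun q => -g2 ν u q * u q - (g1 ν u q) ^ 2) p
    + ν * pdx (pdx (g2 ν u)) p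

/-- The first differential approximation operator of the FTCS scheme:
\`E[u; h, τ, ν] = u_t + (u²/2)_x − ν u_xx + (τ/2) g₂ + (h²/12)(u²)_xxx −
(νh²/12) u_xxxx\`. -/
noncomputable def ftcsFDA (h τ ν : ℝ) (u : ℝ × ℝ → ℝ) : ℝ × ℝ → ℝ :=
  fun p =>
    pdt u p + pdx (fun q => (u q) ^ 2 / 2) p - ν * pdx (pdx u) p
      + τ / 2 * g2 ν u p
      + h ^ 2 / 12 * pdx (pdx (pdx (fun q => (u q) ^ 2))) p
      - ν * h ^ 2 / 12 * pdx (pdx (pdx (pdx u))) p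

/-- The first differential approximation operator of the Lax–Wendroff scheme:
\`E[u; h, τ, ν] = u_t + (u²/2)_x − ν u_xx + (τ²/6) g₃ + (h²/12)(u²)_xxx −
(νh²/12) u_xxxx\`. -/
noncomputable def laxWendroffFDA (h τ ν : ℝ) (u : ℝ × ℝ → ℝ) : ℝ × ℝ → ℝ :=
  fun p =>
    pdt u p + pdx (fun q => (u q) ^ 2 / 2) p - ν * pdx (pdx u) p
      + τ ^ 2 / 6 * g3 ν u p
      + h ^ 2 / 12 * pdx (pdx (pdx (fun q => (u q) ^ 2))) p
      - ν * h ^ 2 / 12 * pdx (pdx (pdx (pdx u))) p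

theorem pdx_scale (l c : ℝ) (w : ℝ × ℝ → ℝ) :
    pdx (fun q => c * w (l * q.1, l ^ 2 * q.2))
      = fun q => (c * l) * pdx w (l * q.1, l ^ 2 * q.2) := by
  funext q
  have h := deriv_comp_mul_left l (fun y => w (y, l ^ 2 * q.2)) q.1
  simp only [smul_eq_mul] at h
  simp only [pdx, deriv_const_mul_field', h]
  ring

theorem pdt_scale (l c : ℝ) (w : ℝ × ℝ → ℝ) :
    pdt (fun q => c * w (l * q.1, l ^ 2 * q.2))
      = fun q => (c * l ^ 2) * pdt w (l * q.1, l ^ 2 * q.2) := by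
  funext q
  have h := deriv_comp_mul_left (l ^ 2) (fun y => w (l * q.1, y)) q.2
  simp only [smul_eq_mul] at h
  simp only [pdt, deriv_const_mul_field', h]
  ring

theorem pdx_scale_of (l c : ℝ) (f w : ℝ × ℝ → ℝ)
    (hf : ∀ q, f q = c * w (l * q.1, l ^ 2 * q.2)) (q : ℝ × ℝ) :
    pdx f q = (c * l) * pdx w (l * q.1, l ^ 2 * q.2) := by
  rw [show f = _ from funext hf, pdx_scale]

theorem g1_scale (ν l : ℝ) (u v : ℝ × ℝ → ℝ)
    (hv : ∀ q, v q = l * u (l * q.1, l ^ 2 * q.2)) (q : ℝ × ℝ) :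
    g1 ν v q = l ^ 3 * g1 ν u (l * q.1, l ^ 2 * q.2) := by
  have h1 := pdx_scale_of l (l ^ 2) (fun q => (v q) ^ 2 / 2) (fun q => (u q) ^ 2 / 2)
    (fun q => by simp only [hv]; ring) q
  have h2 := pdx_scale_of l _ _ _ (pdx_scale_of l _ _ _ hv) q
  simp only [g1, h1, h2]
  ring

theorem g2_scale (ν l : ℝ) (u v : ℝ × ℝ → ℝ)
    (hv : ∀ q, v q = l * u (l * q.1, l ^ 2 * q.2)) (q : ℝ × ℝ) :
    g2 ν v q = l ^ 5 * g2 ν u (l * q.1, l ^ 2 * q.2) := by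
  have hg := g1_scale ν l u v hv
  have h1 := pdx_scale_of l (l ^ 4) (fun q => -g1 ν v q * v q) (fun q => -g1 ν u q * u q)
    (fun q => by simp only [hg, hv q]; ring) q
  have h2 := pdx_scale_of l _ _ _ (pdx_scale_of l _ _ _ hg) q
  simp only [g2, h1, h2]
  ring

theorem g3_scale (ν l : ℝ) (u v : ℝ × ℝ → ℝ)
    (hv : ∀ q, v q = l * u (l * q.1, l ^ 2 * q.2)) (q : ℝ × ℝ) :
    g3 ν v q = l ^ 7 * g3 ν u (l * q.1, l ^ 2 * q.2) := by
  have hg := g1_scale ν l u v hv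
  have hk := g2_scale ν l u v hv
  have h1 := pdx_scale_of l (l ^ 6) (fun q => -g2 ν v q * v q - (g1 ν v q) ^ 2)
    (fun q => -g2 ν u q * u q - (g1 ν u q) ^ 2)
    (fun q => by simp only [hg, hk, hv q]; ring) q
  have h2 := pdx_scale_of l _ _ _ (pdx_scale_of l _ _ _ hk) q
  simp only [g3, h1, h2]
  ring

/-- The Lax–Wendroff first differential approximation is invariant under the
dilatation `(x,t,u,h,τ) ↦ (λ⁻¹x, λ⁻²t, λu, λ⁻¹h, λ⁻²τ)`. -/
theorem laxWendroffFDA_invariant_dilatation (ν h τ : ℝ) (hν : 0 < ν)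
    (hh : 0 < h) (hτ : 0 < τ) (u : ℝ × ℝ → ℝ) (hu : ContDiff ℝ (⊤ : ℕ∞) u)
    (hE : ∀ p : ℝ × ℝ, laxWendroffFDA h τ ν u p = 0) (l : ℝ) (hl : 0 < l) :
    ∀ p : ℝ × ℝ,
      laxWendroffFDA (h / l) (τ / l ^ 2) ν
        (fun q => l * u (l * q.1, l ^ 2 * q.2)) p = 0 := by
  intro p
  have hE' := hE (l * p.1, l ^ 2 * p.2)
  have ht := congrFun (pdt_scale l l u) p
  generalize hvd : (fun q : ℝ × ℝ => l * u (l * q.1, l ^ 2 * q.2)) = v at ht ⊢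
  have hv : ∀ q, v q = l * u (l * q.1, l ^ 2 * q.2) := fun q => by rw [← hvd]
  have h1 := pdx_scale_of l (l ^ 2) (fun q => (v q) ^ 2 / 2) (fun q => (u q) ^ 2 / 2)
    (fun q => by simp only [hv]; ring) p
  have hx2 := pdx_scale_of l _ _ _ (pdx_scale_of l _ _ _ hv)
  have hx4 := pdx_scale_of l _ _ _ (pdx_scale_of l _ _ _ hx2) p
  have hs := pdx_scale_of l _ _ _ (pdx_scale_of l _ _ _
    (pdx_scale_of l (l ^ 2) (fun q => (v q) ^ 2) (fun q => (u q) ^ 2)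
    (fun q => by simp only [hv]; ring))) p
  have hg := g3_scale ν l u v hv p
  have hl0 : l ≠ 0 := hl.ne'
  simp only [laxWendroffFDA] at hE' ⊢
  rw [ht, h1, hx2 p, hx4, hs, hg]
  rw [← mul_zero (l ^ 3), ← hE']
  field_simp
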